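/- Let H be a 3-partite 3-graph on vertex classes (A,B,C), let δ > 0, and let (Z,E) be an (ℓ,t,ε₂)-equipartition of H with Z refining {A,B,C}, such that for every triad P of (Z,E) and every subtriad P' of P with t(P') ≥ δ·t(P) one has d_H(P') ≥ (2/3)·d_H(P). If ε₂ ≤ (δ²/88)·ℓ^(−3), then the vertex partition E_3 ∪ Z_3 is a perfectly ⟨2√δ⟩-regular partition of the bipartite graph G_H^3. -/

import Mathlib

open scoped Classical

noncomputable section

/-- The number of edges of a bipartite graph `G` between vertex subsets `A` and `B`. -/
def bmEdges {α β : Type*} (G : Finset (α × β)) (A : Finset α) (B : Finset β) : ℕ :=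
  (G.filter fun p => p.1 ∈ A ∧ p.2 ∈ B).card

/-- The edge density of a bipartite graph `G` between `A` and `B`. -/
def bmDens {α β : Type*} (G : Finset (α × β)) (A : Finset α) (B : Finset β) : ℝ :=
  (bmEdges G A B : ℝ) / ((A.card : ℝ) * (B.card : ℝ))

/-- `⟨δ⟩`-regularity of a bipartite graph `G` on vertex classes `(A, B)`:
for all `A' ⊆ A`, `B' ⊆ B` with `|A'| ≥ δ|A|`, `|B'| ≥ δ|B|` we have
`d_G(A',B') ≥ (1/2) d_G(A,B)`. -/
def DeltaReg {α β : Type*} (δ : ℝ) (G : Finset (α × β)) (A : Finset α) (B : Finset β) : Prop :=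
  ∀ A' ⊆ A, ∀ B' ⊆ B, δ * (A.card : ℝ) ≤ (A'.card : ℝ) → δ * (B.card : ℝ) ≤ (B'.card : ℝ) →
    bmDens G A' B' ≥ (1 / 2) * bmDens G A B

/-- Szemerédi `ε`-regularity of a bipartite graph on `(A, B)`. -/
def SzReg {α β : Type*} (ε : ℝ) (G : Finset (α × β)) (A : Finset α) (B : Finset β) : Prop :=
  ∀ A' ⊆ A, ∀ B' ⊆ B, ε * (A.card : ℝ) ≤ (A'.card : ℝ) → ε * (B.card : ℝ) ≤ (B'.card : ℝ) →
    |bmDens G A' B' - bmDens G A B| ≤ ε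

/-- `P` is a partition of the finite set `S` (into nonempty parts). -/
def IsPartition {α : Type*} (P : Finset (Finset α)) (S : Finset α) : Prop :=
  (∀ p ∈ P, p.Nonempty) ∧ (∀ p ∈ P, p ⊆ S) ∧ ∀ v ∈ S, ∃! p, p ∈ P ∧ v ∈ p

/-- `Q` refines `P`: every member of `Q` is contained in a member of `P`. -/
def Refines {α : Type*} (Q P : Finset (Finset α)) : Prop :=
  ∀ q ∈ Q, ∃ p ∈ P, q ⊆ p

/-- All parts of `P` have the same size. -/
def EquitableParts {α : Type*} (P : Finset (Finset α)) : Prop :=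
  ∀ p ∈ P, ∀ q ∈ P, p.card = q.card

/-- `S ⊆_β T`, i.e. `|S \ T| < β |S|`. -/
def ApproxSub {α : Type*} [DecidableEq α] (β' : ℝ) (S T : Finset α) : Prop :=
  ((S \ T).card : ℝ) < β' * (S.card : ℝ)

/-- `S ∈_β P`, i.e. `S ⊆_β p` for some `p ∈ P`. -/
def ApproxMem {α : Type*} [DecidableEq α] (β' : ℝ) (S : Finset α) (P : Finset (Finset α)) :
    Prop :=
  ∃ p ∈ P, ApproxSub β' S p

/-- `Q ≺_β P` for partitions `Q`, `P` of the set `S`. -/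
def ApproxRefines {α : Type*} [DecidableEq α] (β' : ℝ) (Q P : Finset (Finset α))
    (S : Finset α) : Prop :=
  ∑ q ∈ Q.filter fun q => ¬ ApproxMem β' q P, (q.card : ℝ) ≤ β' * (S.card : ℝ)

/-- The vertex partition `P ∪ Q` of a bipartite graph `G` on vertex classes `(L, R)` is
`⟨δ⟩`-regular: one can add/remove at most `δ·e(G)` edges so that the bipartite graph induced
on each pair of distinct parts is `⟨δ⟩`-regular. -/
def DeltaRegPartition {α β : Type*} [DecidableEq α] [DecidableEq β]
    (δ : ℝ) (G : Finset (α × β)) (L : Finset α) (R : Finset β)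
    (P : Finset (Finset α)) (Q : Finset (Finset β)) : Prop :=
  ∃ G' : Finset (α × β), G' ⊆ L ×ˢ R ∧
    ((G' \ G).card : ℝ) + ((G \ G').card : ℝ) ≤ δ * (G.card : ℝ) ∧
    ∀ A ∈ P, ∀ B ∈ Q, DeltaReg δ G' A B

/-- The vertex partition `P ∪ Q` of a bipartite graph `G` is perfectly `⟨δ⟩`-regular:
without modifying any edges, each pair of distinct parts induces a `⟨δ⟩`-regular graph. -/
def PerfectDeltaRegPartition {α β : Type*} (δ : ℝ) (G : Finset (α × β))
    (P : Finset (Finset α)) (Q : Finset (Finset β)) : Prop :=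
  ∀ A ∈ P, ∀ B ∈ Q, DeltaReg δ G A B

/-- A 2-partition `(Z, E)` on the vertex set `S`: `Z` partitions `S`, the members of `E` are
pairwise edge-disjoint bipartite graphs between distinct parts of `Z`, and for all distinct
`Z1, Z2 ∈ Z` the complete bipartite graph `Z1 × Z2` is the union of the members of `E`
between `Z1` and `Z2`. -/
def Is2Partition {α : Type*} [DecidableEq α]
    (Z : Finset (Finset α)) (E : Finset (Finset (α × α))) (S : Finset α) : Prop :=
  IsPartition Z S ∧
  (∀ g ∈ E, ∃ Z1 ∈ Z, ∃ Z2 ∈ Z, Z1 ≠ Z2 ∧ g ⊆ Z1 ×ˢ Z2) ∧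
  (∀ g ∈ E, ∀ g' ∈ E, g ≠ g' → Disjoint g g') ∧
  ∀ Z1 ∈ Z, ∀ Z2 ∈ Z, Z1 ≠ Z2 → ∀ p ∈ Z1 ×ˢ Z2, ∃ g ∈ E, g ⊆ Z1 ×ˢ Z2 ∧ p ∈ g

/-- The parts of `Z` contained in `A` (e.g. `Z_i`, the restriction of `Z` to `V_i`). -/
def partsIn {α : Type*} [DecidableEq α] (Z : Finset (Finset α)) (A : Finset α) :
    Finset (Finset α) :=
  Z.filter fun z => z ⊆ A

/-- The members of `E` contained in `A × B` (e.g. `E_i`). -/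
def graphsIn {α : Type*} [DecidableEq α] (E : Finset (Finset (α × α))) (A B : Finset α) :
    Finset (Finset (α × α)) :=
  E.filter fun g => g ⊆ A ×ˢ B

/-- `H` is a 3-partite 3-graph on the (disjoint) vertex classes `(V1, V2, V3)`. -/
def Is3Partite {α : Type*} (H : Finset (α × α × α)) (V1 V2 V3 : Finset α) : Prop :=
  (Disjoint V1 V2 ∧ Disjoint V1 V3 ∧ Disjoint V2 V3) ∧ H ⊆ V1 ×ˢ V2 ×ˢ V3

/-- The auxiliary bipartite graph `G_H^1` on `(V2 × V3, V1)`. -/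
def GH1 {α : Type*} [DecidableEq α] (H : Finset (α × α × α)) : Finset ((α × α) × α) :=
  H.image fun t => ((t.2.1, t.2.2), t.1)

/-- The auxiliary bipartite graph `G_H^2` on `(V1 × V3, V2)`. -/
def GH2 {α : Type*} [DecidableEq α] (H : Finset (α × α × α)) : Finset ((α × α) × α) :=
  H.image fun t => ((t.1, t.2.2), t.2.1)

/-- The auxiliary bipartite graph `G_H^3` on `(V1 × V2, V3)`. -/
def GH3 {α : Type*} [DecidableEq α] (H : Finset (α × α × α)) : Finset ((α × α) × α) :=
  H.image fun t => ((t.1, t.2.1), t.2.2)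

/-- The 2-partition `(Z, E)` is `⟨δ⟩`-good: every bipartite graph in `E` (between any two
distinct vertex clusters of `Z`) is `⟨δ⟩`-regular. -/
def DeltaGood {α : Type*} [DecidableEq α] (δ : ℝ)
    (Z : Finset (Finset α)) (E : Finset (Finset (α × α))) : Prop :=
  ∀ g ∈ E, ∀ Z1 ∈ Z, ∀ Z2 ∈ Z, Z1 ≠ Z2 → g ⊆ Z1 ×ˢ Z2 → DeltaReg δ g Z1 Z2

/-- `(Z, E)` is a `⟨δ⟩`-regular partition of the 3-partite 3-graph `H` on `(V1, V2, V3)`: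
it is a `⟨δ⟩`-good 2-partition with `Z ≺ {V1, V2, V3}` and, for each `1 ≤ i ≤ 3`,
`E_i ∪ Z_i` is a `⟨δ⟩`-regular vertex partition of `G_H^i`. -/
def Delta3RegPartition {α : Type*} [DecidableEq α] (δ : ℝ) (H : Finset (α × α × α))
    (V1 V2 V3 : Finset α) (Z : Finset (Finset α)) (E : Finset (Finset (α × α))) : Prop :=
  Is2Partition Z E (V1 ∪ V2 ∪ V3) ∧ Refines Z {V1, V2, V3} ∧ DeltaGood δ Z E ∧
  DeltaRegPartition δ (GH1 H) (V2 ×ˢ V3) V1 (graphsIn E V2 V3) (partsIn Z V1) ∧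
  DeltaRegPartition δ (GH2 H) (V1 ×ˢ V3) V2 (graphsIn E V1 V3) (partsIn Z V2) ∧
  DeltaRegPartition δ (GH3 H) (V1 ×ˢ V2) V3 (graphsIn E V1 V2) (partsIn Z V3)

/-- The tower function: `twr 0 = 1` and `twr (x+1) = 2 ^ twr x`. -/
def twr : ℕ → ℕ
  | 0 => 1
  | n + 1 => 2 ^ twr n

/-- The wowzer function: `twr` iterated `x` times, applied to `1`. -/
def wow (x : ℕ) : ℕ := twr^[x] 1

/-- The set of triangles of the triad given by bipartite graphs `e1`, `e2`, `e3`: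
triples `(a, b, c)` with `(a,b) ∈ e1`, `(a,c) ∈ e2` and `(b,c) ∈ e3`. -/
def tri {α β γ : Type*} [DecidableEq α] [DecidableEq β] [DecidableEq γ]
    (e1 : Finset (α × β)) (e2 : Finset (α × γ)) (e3 : Finset (β × γ)) :
    Finset (α × β × γ) :=
  ((e1 ×ˢ e3).filter fun q => q.1.2 = q.2.1 ∧ (q.1.1, q.2.2) ∈ e2).image
    fun q => (q.1.1, q.1.2, q.2.2)

/-- The density `d_H(P)` of a triad `P = (e1, e2, e3)` in the 3-graph `H`. -/
def triDens {α : Type*} [DecidableEq α] (H : Finset (α × α × α))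
    (e1 e2 e3 : Finset (α × α)) : ℝ :=
  ((H ∩ tri e1 e2 e3).card : ℝ) / ((tri e1 e2 e3).card : ℝ)

/-- The triad `(e1, e2, e3)` is `ε`-regular in the 3-graph `H`: every subtriad `(f1, f2, f3)`
with `t(P') ≥ ε t(P)` satisfies `|d_H(P') - d_H(P)| ≤ ε`. -/
def TriadReg {α : Type*} [DecidableEq α] (ε : ℝ) (H : Finset (α × α × α))
    (e1 e2 e3 : Finset (α × α)) : Prop :=
  ∀ f1 ⊆ e1, ∀ f2 ⊆ e2, ∀ f3 ⊆ e3,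
    ε * ((tri e1 e2 e3).card : ℝ) ≤ ((tri f1 f2 f3).card : ℝ) →
    |triDens H f1 f2 f3 - triDens H e1 e2 e3| ≤ ε

/-- The triads of the 2-partition `(Z, E)`: triples of members of `E` forming a tripartite
graph on three distinct parts of `Z`. -/
def triads {α : Type*} [DecidableEq α] (Z : Finset (Finset α))
    (E : Finset (Finset (α × α))) :
    Finset (Finset (α × α) × Finset (α × α) × Finset (α × α)) :=
  (E ×ˢ E ×ˢ E).filter fun e => ∃ Z1 ∈ Z, ∃ Z2 ∈ Z, ∃ Z3 ∈ Z,
    Z1 ≠ Z2 ∧ Z1 ≠ Z3 ∧ Z2 ≠ Z3 ∧ e.1 ⊆ Z1 ×ˢ Z2 ∧ e.2.1 ⊆ Z1 ×ˢ Z3 ∧ e.2.2 ⊆ Z2 ×ˢ Z3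

/-- An `(ℓ, t, ε₂)`-equipartition on `S`: a 2-partition `(Z, E)` where `Z` is an equitable
partition of order `t` and every graph in `E` is `ε₂`-regular of density `ℓ⁻¹ ± ε₂`. -/
def IsEquipartition23 {α : Type*} [DecidableEq α] (ℓ t : ℕ) (ε₂ : ℝ)
    (Z : Finset (Finset α)) (E : Finset (Finset (α × α))) (S : Finset α) : Prop :=
  Is2Partition Z E S ∧ EquitableParts Z ∧ Z.card = t ∧
  ∀ g ∈ E, ∀ Z1 ∈ Z, ∀ Z2 ∈ Z, Z1 ≠ Z2 → g ⊆ Z1 ×ˢ Z2 →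
    SzReg ε₂ g Z1 Z2 ∧ |bmDens g Z1 Z2 - 1 / (ℓ : ℝ)| ≤ ε₂

/-- The `(ℓ,t,ε₂)`-equipartition `(Z, E)` is an `ε`-regular partition of the 3-graph `H`
with vertex set `S` (Frankl–Rödl): `Σ t(P) ≤ ε |S|³`, summed over non-`ε`-regular triads. -/
def FRRegPartition {α : Type*} [DecidableEq α] (ε : ℝ) (H : Finset (α × α × α))
    (S : Finset α) (Z : Finset (Finset α)) (E : Finset (Finset (α × α))) : Prop :=
  ∑ e ∈ (triads Z E).filter fun e => ¬ TriadReg ε H e.1 e.2.1 e.2.2,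
    ((tri e.1 e.2.1 e.2.2).card : ℝ) ≤ ε * (S.card : ℝ) ^ 3

/-- The function `f` from the definition of quasirandomness of a triad. -/
def fQ {α : Type*} [DecidableEq α] (H : Finset (α × α × α)) (e1 e2 e3 : Finset (α × α))
    (x y z : α) : ℝ :=
  if (x, y, z) ∈ tri e1 e2 e3 then
    (if (x, y, z) ∈ H then 1 - triDens H e1 e2 e3 else -triDens H e1 e2 e3)
  else 0

/-- The octahedron sum from the definition of quasirandomness. -/
def octSum {α : Type*} [DecidableEq α] (H : Finset (α × α × α)) (e1 e2 e3 : Finset (α × α))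
    (X Y Z : Finset α) : ℝ :=
  ∑ x0 ∈ X, ∑ x1 ∈ X, ∑ y0 ∈ Y, ∑ y1 ∈ Y, ∑ z0 ∈ Z, ∑ z1 ∈ Z,
    fQ H e1 e2 e3 x0 y0 z0 * fQ H e1 e2 e3 x0 y0 z1 * fQ H e1 e2 e3 x0 y1 z0 *
      fQ H e1 e2 e3 x0 y1 z1 * fQ H e1 e2 e3 x1 y0 z0 * fQ H e1 e2 e3 x1 y0 z1 *
      fQ H e1 e2 e3 x1 y1 z0 * fQ H e1 e2 e3 x1 y1 z1

/-- The triad `(e1, e2, e3)` on vertex classes `(X, Y, Z)` with `d(e1) = d(e2) = d(e3) = d`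
and `|X| = |Y| = |Z| = n` is `a`-quasirandom in `H`: the octahedron sum is at most
`a d¹² n⁶`. -/
def Quasirandom {α : Type*} [DecidableEq α] (a : ℝ) (H : Finset (α × α × α))
    (e1 e2 e3 : Finset (α × α)) (X Y Z : Finset α) : Prop :=
  ∀ (d : ℝ) (n : ℕ), bmDens e1 X Y = d → bmDens e2 X Z = d → bmDens e3 Y Z = d →
    X.card = n → Y.card = n → Z.card = n →
    octSum H e1 e2 e3 X Y Z ≤ a * d ^ 12 * (n : ℝ) ^ 6

/-- The `(ℓ,t,ε₂)`-equipartition `(Z, E)` is an `a`-quasirandom partition of the 3-graph `H`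
with vertex set `S`: `Σ t(P) ≤ a |S|³`, summed over non-`a`-quasirandom triads. -/
def QuasirandomPartition {α : Type*} [DecidableEq α] (a : ℝ) (H : Finset (α × α × α))
    (S : Finset α) (Z : Finset (Finset α)) (E : Finset (Finset (α × α))) : Prop :=
  ∑ e ∈ (E ×ˢ E ×ˢ E).filter fun e => ∃ Z1 ∈ Z, ∃ Z2 ∈ Z, ∃ Z3 ∈ Z,
      Z1 ≠ Z2 ∧ Z1 ≠ Z3 ∧ Z2 ≠ Z3 ∧
      e.1 ⊆ Z1 ×ˢ Z2 ∧ e.2.1 ⊆ Z1 ×ˢ Z3 ∧ e.2.2 ⊆ Z2 ×ˢ Z3 ∧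
      ¬ Quasirandom a H e.1 e.2.1 e.2.2 Z1 Z2 Z3,
    ((tri e.1 e.2.1 e.2.2).card : ℝ) ≤ a * (S.card : ℝ) ^ 3

/-- `e(i) = 2^(i+10)`. -/
def efn (i : ℕ) : ℕ := 2 ^ (i + 10)

/-- `t(1) = 2^250` and `t(i+1) = 2^(t(i)/e(i))` for `i ≥ 1`. -/
def tfn : ℕ → ℕ
  | 0 => 0
  | 1 => 2 ^ 250
  | n + 2 => 2 ^ (tfn (n + 1) / efn (n + 1))

/-- `w(1) = 1` and `w(i+1) = w*(i) = t(w(i))/e(i)` for `i ≥ 1`. -/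
def wfn : ℕ → ℕ
  | 0 => 0
  | 1 => 1
  | n + 2 => tfn (wfn (n + 1)) / efn (n + 1)

/-- `w*(s) = t(w(s))/e(s)`. -/
def wstar (s : ℕ) : ℕ := tfn (wfn s) / efn s

end


section FRHelpers

variable {α : Type*} [DecidableEq α]

lemma fr_mem_tri (e1 e2 e3 : Finset (α × α)) (a b c : α) :
    (a, b, c) ∈ tri e1 e2 e3 ↔ (a, b) ∈ e1 ∧ (a, c) ∈ e2 ∧ (b, c) ∈ e3 := by
  unfold tri
  simp only [Finset.mem_image, Finset.mem_filter, Finset.mem_product, Prod.mk.injEq, Prod.exists]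
  constructor
  · rintro ⟨a', b', b'', c', ⟨⟨h1, h3⟩, h, h2⟩, rfl, rfl, rfl⟩
    subst h
    exact ⟨h1, h2, h3⟩
  · rintro ⟨h1, h2, h3⟩
    exact ⟨a, b, b, c, ⟨⟨h1, h3⟩, rfl, h2⟩, rfl, rfl, rfl⟩

/-- neighbourhood in `S` -/
def frN (e : Finset (α × α)) (x : α) (S : Finset α) : Finset α := S.filter fun w => (x, w) ∈ e

lemma fr_edges (e : Finset (α × α)) (X S : Finset α) :
    bmEdges e X S = ∑ x ∈ X, (frN e x S).card := by
  unfold bmEdges frN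
  have : (e.filter fun p => p.1 ∈ X ∧ p.2 ∈ S).card = ((X ×ˢ S).filter fun p => p ∈ e).card := by
    congr 1; ext ⟨a, b⟩; simp; tauto
  refine Eq.trans (by congr!) (this.trans ?_)
  rw [Finset.card_filter, Finset.sum_product]
  simp only [Finset.card_filter]

lemma fr_tri_card (e1 e2 e3 : Finset (α × α)) (S : Finset α) (h2 : ∀ q ∈ e2, q.2 ∈ S) :
    (tri e1 e2 e3).card = ∑ p ∈ e1, (frN e3 p.2 (frN e2 p.1 S)).card := by
  have : (tri e1 e2 e3).card =
      ((e1 ×ˢ S).filter fun q => (q.1.1, q.2) ∈ e2 ∧ (q.1.2, q.2) ∈ e3).card := by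
    refine Finset.card_bij' (fun t _ => ((t.1, t.2.1), t.2.2)) (fun q _ => (q.1.1, q.1.2, q.2))
      ?_ ?_ ?_ ?_
    · rintro ⟨a, b, c⟩ h
      rw [fr_mem_tri] at h
      have := h2 _ h.2.1
      simp_all
    · rintro ⟨⟨a, b⟩, c⟩ h
      rw [fr_mem_tri]
      simp_all
    · intros; rfl
    · intros; rfl
  rw [this, Finset.card_filter, Finset.sum_product]
  refine Finset.sum_congr rfl fun p _ => ?_
  unfold frN
  rw [Finset.filter_filter, Finset.card_filter]

lemma fr_bad_lower (e : Finset (α × α)) (X S : Finset α) (ε p : ℝ) (hε : 0 ≤ ε)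
    (h : ∀ X' ⊆ X, ε * X.card ≤ X'.card → p * (X'.card * S.card) ≤ bmEdges e X' S) :
    ((X.filter fun x => ((frN e x S).card : ℝ) < p * S.card).card : ℝ) ≤ ε * X.card := by
  by_contra hc
  push Not at hc
  have h1 := h _ (Finset.filter_subset _ _) hc.le
  set U := X.filter fun x => ((frN e x S).card : ℝ) < p * S.card with hU
  have hne : U.Nonempty := by
    rw [← Finset.card_pos]
    have : (0 : ℝ) < U.card := lt_of_le_of_lt (by positivity) hc
    exact_mod_cast this
  rw [fr_edges] at h1
  push_cast at h1
  have : ∑ x ∈ U, ((frN e x S).card : ℝ) < ∑ x ∈ U, p * S.card :=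
    Finset.sum_lt_sum_of_nonempty hne fun x hx => (Finset.mem_filter.1 hx).2
  rw [Finset.sum_const, nsmul_eq_mul] at this
  nlinarith

lemma fr_bad_upper (e : Finset (α × α)) (X S : Finset α) (ε p : ℝ) (hε : 0 ≤ ε)
    (h : ∀ X' ⊆ X, ε * X.card ≤ X'.card → (bmEdges e X' S : ℝ) ≤ p * (X'.card * S.card)) :
    ((X.filter fun x => p * S.card < ((frN e x S).card : ℝ)).card : ℝ) ≤ ε * X.card := by
  by_contra hc
  push Not at hc
  have h1 := h _ (Finset.filter_subset _ _) hc.le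
  set U := X.filter fun x => p * S.card < ((frN e x S).card : ℝ) with hU
  have hne : U.Nonempty := by
    rw [← Finset.card_pos]
    have : (0 : ℝ) < U.card := lt_of_le_of_lt (by positivity) hc
    exact_mod_cast this
  rw [fr_edges] at h1
  push_cast at h1
  have : ∑ x ∈ U, p * S.card < ∑ x ∈ U, ((frN e x S).card : ℝ) :=
    Finset.sum_lt_sum_of_nonempty hne fun x hx => (Finset.mem_filter.1 hx).2
  rw [Finset.sum_const, nsmul_eq_mul] at this
  nlinarith

/-- few bad pairs -/
lemma fr_pairs (X Y : Finset α) (ε : ℝ) (hε : 0 ≤ ε) (bX : α → Prop) (b : α × α → Prop)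
    (h1 : ((X.filter bX).card : ℝ) ≤ ε * X.card)
    (h2 : ∀ x ∈ X, ¬ bX x → ((Y.filter fun y => b (x, y)).card : ℝ) ≤ ε * Y.card) :
    (((X ×ˢ Y).filter b).card : ℝ) ≤ 2 * ε * (X.card * Y.card) := by
  have : ((X ×ˢ Y).filter b).card = ∑ x ∈ X, (Y.filter fun y => b (x, y)).card := by
    rw [Finset.card_filter, Finset.sum_product]
    simp only [Finset.card_filter]
  rw [this]
  push_cast
  calc ∑ x ∈ X, ((Y.filter fun y => b (x, y)).card : ℝ)
      ≤ ∑ x ∈ X, ((if bX x then (1 : ℝ) else 0) * Y.card + ε * Y.card) := by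
        refine Finset.sum_le_sum fun x hx => ?_
        by_cases hb : bX x
        · have : ((Y.filter fun y => b (x, y)).card : ℝ) ≤ Y.card := by
            exact_mod_cast Finset.card_filter_le _ _
          have h0 : 0 ≤ ε * (Y.card : ℝ) := by positivity
          simp only [hb, if_true]; linarith
        · simpa [hb] using h2 x hx hb
    _ = (X.filter bX).card * Y.card + X.card * (ε * Y.card) := by
        rw [Finset.sum_add_distrib, ← Finset.sum_mul, Finset.sum_const, nsmul_eq_mul]
        simp
    _ ≤ _ := by
        have := mul_le_mul_of_nonneg_right h1 (Nat.cast_nonneg (α := ℝ) Y.card)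
        nlinarith

/-- two-sided regularity in multiplicative form -/
def FrReg (ε p q : ℝ) (e : Finset (α × α)) (X W : Finset α) : Prop :=
  ∀ X' ⊆ X, ∀ W' ⊆ W, ε * X.card ≤ X'.card → ε * W.card ≤ W'.card →
    p * (X'.card * W'.card) ≤ bmEdges e X' W' ∧ (bmEdges e X' W' : ℝ) ≤ q * (X'.card * W'.card)

lemma fr_reg_of (ε d : ℝ) (e : Finset (α × α)) (X W : Finset α) (h : SzReg ε e X W)
    (hd : |bmDens e X W - d| ≤ ε) : FrReg ε (d - 2 * ε) (d + 2 * ε) e X W := by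
  intro X' hX W' hW h1 h2
  have h3 := h X' hX W' hW h1 h2
  rw [abs_le] at h3 hd
  have key : bmDens e X' W' * (X'.card * W'.card) = bmEdges e X' W' := by
    unfold bmDens
    by_cases h0 : (X'.card : ℝ) * W'.card = 0
    · rw [h0]
      have : X' = ∅ ∨ W' = ∅ := by simpa using h0
      unfold bmEdges
      rcases this with rfl | rfl <;> simp
    · exact div_mul_cancel₀ _ h0
  rw [← key]
  have h0 : (0 : ℝ) ≤ X'.card * W'.card := by positivity
  constructor <;> apply mul_le_mul_of_nonneg_right _ h0 <;> linarith [h3.1, h3.2, hd.1, hd.2]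

lemma fr_tri_lower (ε p q : ℝ) (hε : 0 ≤ ε) (hp : 0 ≤ p) (hp1 : p ≤ 1)
    (X Y W W' : Finset α) (F e2 e3 : Finset (α × α))
    (hF : F ⊆ X ×ˢ Y) (hW : W' ⊆ W)
    (h2 : FrReg ε p q e2 X W) (h3 : FrReg ε p q e3 Y W)
    (hw : ε * W.card ≤ p * W'.card) :
    ((F.card : ℝ) - 2 * ε * (X.card * Y.card)) * (p ^ 2 * W'.card) ≤
      (tri F (e2.filter fun x => x.2 ∈ W') (e3.filter fun x => x.2 ∈ W')).card := by
  rw [fr_tri_card _ _ _ W' (by intro q hq; exact (Finset.mem_filter.1 hq).2)]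
  have e : ∀ x y, frN (e3.filter fun x => x.2 ∈ W') y (frN (e2.filter fun x => x.2 ∈ W') x W') =
      frN e3 y (frN e2 x W') := by
    intro x y; ext w; simp [frN]; tauto
  simp only [e]
  have hw1 : ε * W.card ≤ W'.card := hw.trans (by
    have := mul_le_mul_of_nonneg_right hp1 (Nat.cast_nonneg (α := ℝ) W'.card); linarith)
  let b : α × α → Prop := fun z => ((frN e3 z.2 (frN e2 z.1 W')).card : ℝ) < p ^ 2 * W'.card
  have hb : (((X ×ˢ Y).filter b).card : ℝ) ≤ 2 * ε * (X.card * Y.card) := by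
    apply fr_pairs X Y ε hε (fun x => ((frN e2 x W').card : ℝ) < p * W'.card) b
    · exact fr_bad_lower e2 X W' ε p hε fun X' hX' hc => (h2 X' hX' W' hW hc hw1).1
    · intro x hx hgood
      push Not at hgood
      have hsub : frN e2 x W' ⊆ W := (Finset.filter_subset _ _).trans hW
      refine le_trans ?_ (fr_bad_lower e3 Y (frN e2 x W') ε p hε fun Y' hY' hc =>
        (h3 Y' hY' _ hsub hc (hw.trans hgood)).1)
      have : (Y.filter fun y => b (x, y)) ⊆ Y.filter fun y =>
          ((frN e3 y (frN e2 x W')).card : ℝ) < p * (frN e2 x W').card := by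
        intro y hy
        rw [Finset.mem_filter] at hy ⊢
        refine ⟨hy.1, lt_of_lt_of_le hy.2 ?_⟩
        have := mul_le_mul_of_nonneg_left hgood hp
        nlinarith
      exact_mod_cast Finset.card_le_card this
  have hcard : (F.card : ℝ) ≤ (F.filter fun z => ¬ b z).card + ((X ×ˢ Y).filter b).card := by
    have h1 := Finset.card_filter_add_card_filter_not (s := F) b
    have h2 : (F.filter b).card ≤ ((X ×ˢ Y).filter b).card :=
      Finset.card_le_card (Finset.filter_subset_filter _ hF)
    have : F.card ≤ (F.filter fun z => ¬ b z).card + ((X ×ˢ Y).filter b).card := by omega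
    exact_mod_cast this
  calc _ ≤ ((F.filter fun z => ¬ b z).card : ℝ) * (p ^ 2 * W'.card) := by
        apply mul_le_mul_of_nonneg_right _ (by positivity); linarith
    _ = ∑ z ∈ F.filter fun z => ¬ b z, (p ^ 2 * W'.card : ℝ) := by
        rw [Finset.sum_const, nsmul_eq_mul]
    _ ≤ ∑ z ∈ F.filter fun z => ¬ b z, ((frN e3 z.2 (frN e2 z.1 W')).card : ℝ) :=
        Finset.sum_le_sum fun z hz => not_lt.1 (Finset.mem_filter.1 hz).2
    _ ≤ ∑ z ∈ F, ((frN e3 z.2 (frN e2 z.1 W')).card : ℝ) :=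
        Finset.sum_le_sum_of_subset_of_nonneg (Finset.filter_subset _ _)
          fun _ _ _ => by positivity
    _ = _ := by push_cast; rfl

lemma fr_tri_upper (ε p q : ℝ) (hε : 0 ≤ ε) (hε1 : ε ≤ 1) (hq : 0 ≤ q) (hq1 : ε ≤ q ^ 2)
    (X Y W : Finset α) (F e2 e3 : Finset (α × α))
    (hF : F ⊆ X ×ˢ Y)
    (h2 : FrReg ε p q e2 X W) (h3 : FrReg ε p q e3 Y W)
    (e2W : ∀ x ∈ e2, x.2 ∈ W) :
    ((tri F e2 e3).card : ℝ) ≤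
      F.card * (q ^ 2 * W.card) + 2 * ε * (X.card * Y.card) * W.card := by
  rw [fr_tri_card _ _ _ W e2W]
  have hw1 : ε * W.card ≤ W.card := by
    have := mul_le_mul_of_nonneg_right hε1 (Nat.cast_nonneg (α := ℝ) W.card); linarith
  let b : α × α → Prop := fun z => q ^ 2 * W.card < ((frN e3 z.2 (frN e2 z.1 W)).card : ℝ)
  have hb : (((X ×ˢ Y).filter b).card : ℝ) ≤ 2 * ε * (X.card * Y.card) := by
    apply fr_pairs X Y ε hε (fun x => q * W.card < ((frN e2 x W).card : ℝ)) b
    · exact fr_bad_upper e2 X W ε q hε fun X' hX' hc =>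
        (h2 X' hX' W (Finset.Subset.refl _) hc hw1).2
    · intro x hx hgood
      push Not at hgood
      have hsub : frN e2 x W ⊆ W := (Finset.filter_subset _ _)
      by_cases hs : ε * W.card ≤ (frN e2 x W).card
      · refine le_trans ?_ (fr_bad_upper e3 Y (frN e2 x W) ε q hε fun Y' hY' hc =>
          (h3 Y' hY' _ hsub hc hs).2)
        have : (Y.filter fun y => b (x, y)) ⊆ Y.filter fun y =>
            q * (frN e2 x W).card < ((frN e3 y (frN e2 x W)).card : ℝ) := by
          intro y hy
          rw [Finset.mem_filter] at hy ⊢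
          refine ⟨hy.1, lt_of_le_of_lt ?_ hy.2⟩
          have := mul_le_mul_of_nonneg_left hgood hq
          nlinarith
        exact_mod_cast Finset.card_le_card this
      · push Not at hs
        have : (Y.filter fun y => b (x, y)) = ∅ := by
          apply Finset.filter_false_of_mem
          intro y _
          have h1 : ((frN e3 y (frN e2 x W)).card : ℝ) ≤ (frN e2 x W).card := by
            exact_mod_cast Finset.card_filter_le _ _
          have := mul_le_mul_of_nonneg_right hq1 (Nat.cast_nonneg (α := ℝ) W.card)
          simp only [b, not_lt]
          linarith
        rw [this]
        simp only [Finset.card_empty, Nat.cast_zero]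
        positivity
  push_cast
  calc ∑ z ∈ F, ((frN e3 z.2 (frN e2 z.1 W)).card : ℝ)
      ≤ ∑ z ∈ F, (q ^ 2 * W.card + (if b z then (1 : ℝ) else 0) * W.card) := by
        refine Finset.sum_le_sum fun z _ => ?_
        by_cases hz : b z
        · have h1 : ((frN e3 z.2 (frN e2 z.1 W)).card : ℝ) ≤ W.card := by
            exact_mod_cast (Finset.card_filter_le _ _).trans (Finset.card_filter_le _ _)
          have : 0 ≤ q ^ 2 * (W.card : ℝ) := by positivity
          simp only [hz, if_true]; linarith
        · have := not_lt.1 hz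
          simpa [hz] using this
    _ = F.card * (q ^ 2 * W.card) + (F.filter b).card * W.card := by
        rw [Finset.sum_add_distrib, Finset.sum_const, nsmul_eq_mul, ← Finset.sum_mul,
          Finset.sum_boole]
    _ ≤ _ := by
        have h2 : ((F.filter b).card : ℝ) ≤ ((X ×ˢ Y).filter b).card := by
          exact_mod_cast Finset.card_le_card (Finset.filter_subset_filter _ hF)
        have := mul_le_mul_of_nonneg_right (h2.trans hb) (Nat.cast_nonneg (α := ℝ) W.card)
        linarith

lemma fr_arith (d ε s n f f' w T T' : ℝ) (hd : 0 < d) (hd1 : d ≤ 1) (hs : 0 < s) (hs1 : s ≤ 1)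
    (hε : 0 ≤ ε) (hε1 : ε ≤ s ^ 4 * d ^ 3 / 1408) (hn : 0 < n)
    (hf : (d - 2 * ε) * (n * n) ≤ f) (hf' : s * f ≤ f') (hw : 0 ≤ w)
    (hT' : (f' - 2 * ε * (n * n)) * ((d - 2 * ε) ^ 2 * w) ≤ T')
    (hT : T ≤ f * ((d + 2 * ε) ^ 2 * n) + 2 * ε * (n * n) * n) :
    3 / 4 * (f' * w) * T ≤ T' * (f * n) := by
  have a1 : s ^ 4 ≤ s := by
    have : s ^ 3 ≤ 1 := pow_le_one₀ hs.le hs1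
    nlinarith
  have a2 : d ^ 3 ≤ d := by
    have : d ^ 2 ≤ 1 := pow_le_one₀ hd.le hd1
    nlinarith
  have b1 : ε ≤ s * d / 1408 := by
    have : s ^ 4 * d ^ 3 ≤ s * d := mul_le_mul a1 a2 (by positivity) hs.le
    linarith
  have b2 : ε ≤ d / 1408 := by nlinarith
  have b3 : ε ≤ d ^ 3 / 1408 := by
    have : s ^ 4 ≤ 1 := pow_le_one₀ hs.le hs1
    have : s ^ 4 * d ^ 3 ≤ 1 * d ^ 3 := mul_le_mul_of_nonneg_right this (by positivity)
    linarith
  have hnn : 0 < n * n := by positivity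
  have c1 : 99 / 100 * d * (n * n) ≤ f := by
    refine le_trans (mul_le_mul_of_nonneg_right ?_ hnn.le) hf
    linarith
  have fpos : 0 < f := lt_of_lt_of_le (by positivity) c1
  have f'pos : 0 < f' := lt_of_lt_of_le (by positivity) hf'
  have c2 : 2 * ε * (n * n) ≤ f' / 100 := by
    have e1 : s * (99 / 100 * d * (n * n)) ≤ f' := (mul_le_mul_of_nonneg_left c1 hs.le).trans hf'
    have e2 : ε * (n * n) ≤ s * d / 1408 * (n * n) := mul_le_mul_of_nonneg_right b1 hnn.le
    have : 0 < s * d * (n * n) := by positivity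
    nlinarith
  have c3 : 98 / 100 * d ^ 2 ≤ (d - 2 * ε) ^ 2 := by nlinarith
  have c4 : (d + 2 * ε) ^ 2 ≤ 101 / 100 * d ^ 2 := by nlinarith
  have c5 : 2 * ε * (n * n) * n ≤ 1 / 100 * (f * d ^ 2 * n) := by
    have e1 : 99 / 100 * d * (n * n) * (d ^ 2 * n) ≤ f * (d ^ 2 * n) :=
      mul_le_mul_of_nonneg_right c1 (by positivity)
    have e2 : ε * (n * n * n) ≤ d ^ 3 / 1408 * (n * n * n) :=
      mul_le_mul_of_nonneg_right b3 (by positivity)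
    have : 0 < d ^ 3 * (n * n * n) := by positivity
    nlinarith
  have g1 : 97 / 100 * (f' * w * d ^ 2) ≤ T' := by
    refine le_trans ?_ hT'
    have : 99 / 100 * f' * (98 / 100 * d ^ 2 * w) ≤
        (f' - 2 * ε * (n * n)) * ((d - 2 * ε) ^ 2 * w) := by
      apply mul_le_mul (by linarith) (mul_le_mul_of_nonneg_right c3 hw) (by positivity)
      linarith
    refine le_trans ?_ this
    have : 0 ≤ f' * w * d ^ 2 := by positivity
    nlinarith
  have g2 : T ≤ 102 / 100 * (f * n * d ^ 2) := by
    have : f * ((d + 2 * ε) ^ 2 * n) ≤ f * (101 / 100 * d ^ 2 * n) := by gcongr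
    nlinarith
  calc 3 / 4 * (f' * w) * T ≤ 3 / 4 * (f' * w) * (102 / 100 * (f * n * d ^ 2)) := by gcongr
    _ ≤ 97 / 100 * (f' * w * d ^ 2) * (f * n) := by
      have : 0 ≤ f' * w * d ^ 2 * (f * n) := by positivity
      nlinarith
    _ ≤ _ := by gcongr

lemma fr_edges_GH3 (H : Finset (α × α × α)) (F : Finset (α × α)) (W : Finset α) :
    bmEdges (GH3 H) F W = (H.filter fun t => (t.1, t.2.1) ∈ F ∧ t.2.2 ∈ W).card := by
  unfold bmEdges GH3
  symm
  refine Finset.card_bij (fun t _ => ((t.1, t.2.1), t.2.2)) ?_ ?_ ?_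
  · rintro ⟨a, b, c⟩ h
    simp only [Finset.mem_filter, Finset.mem_image] at h ⊢
    exact ⟨⟨_, h.1, rfl⟩, h.2⟩
  · rintro ⟨a, b, c⟩ _ ⟨a', b', c'⟩ _ h
    simpa [and_assoc] using h
  · rintro x h
    simp only [Finset.mem_filter, Finset.mem_image] at h
    obtain ⟨⟨t, ht, rfl⟩, h⟩ := h
    exact ⟨t, Finset.mem_filter.2 ⟨ht, h⟩, rfl⟩

lemma fr_triDens_mul (H : Finset (α × α × α)) (e1 e2 e3 : Finset (α × α)) :
    triDens H e1 e2 e3 * (tri e1 e2 e3).card = (H ∩ tri e1 e2 e3).card := by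
  unfold triDens
  by_cases h : (tri e1 e2 e3).card = 0
  · have : tri e1 e2 e3 = ∅ := Finset.card_eq_zero.1 h
    simp [this]
  · field_simp

end FRHelpers

set_option maxHeartbeats 2000000 in
/-- **Claim 4.9 (reduction).** -/
theorem fr_reduction {α : Type*} [DecidableEq α]
    (A B C : Finset α) (H : Finset (α × α × α)) (hH : Is3Partite H A B C)
    (δ ε₂ : ℝ) (hδ : 0 < δ) (ℓ t : ℕ)
    (Z : Finset (Finset α)) (E : Finset (Finset (α × α)))
    (hequi : IsEquipartition23 ℓ t ε₂ Z E (A ∪ B ∪ C))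
    (href : Refines Z {A, B, C})
    (hdense : ∀ e ∈ triads Z E, ∀ f1 ⊆ e.1, ∀ f2 ⊆ e.2.1, ∀ f3 ⊆ e.2.2,
      δ * ((tri e.1 e.2.1 e.2.2).card : ℝ) ≤ ((tri f1 f2 f3).card : ℝ) →
      triDens H f1 f2 f3 ≥ (2 / 3) * triDens H e.1 e.2.1 e.2.2)
    (hε₂ : ε₂ ≤ δ ^ 2 / 88 * ((ℓ : ℝ) ^ 3)⁻¹) :
    PerfectDeltaRegPartition (2 * Real.sqrt δ) (GH3 H) (graphsIn E A B) (partsIn Z C) := by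
  obtain ⟨⟨⟨hZne, hZsub, hZuniq⟩, hEsub, hEdisj, hEcov⟩, hEq, -, hreg⟩ := hequi
  obtain ⟨⟨hAB, hAC, hBC⟩, -⟩ := hH
  intro g hg W hW F' hF' W' hW' hFc hWc
  obtain ⟨hgE, hgAB⟩ := Finset.mem_filter.1 hg
  obtain ⟨hWZ, hWC⟩ := Finset.mem_filter.1 hW
  obtain ⟨X, hX, Y, hY, hXY, hgXY⟩ := hEsub g hgE
  rcases Finset.eq_empty_or_nonempty g with rfl | hgne
  · have : bmDens (GH3 H) ∅ W = 0 := by simp [bmDens]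
    rw [this, mul_zero]
    unfold bmDens
    positivity
  have place : ∀ X ∈ Z, ∀ x ∈ X, (x ∈ A → X ⊆ A) ∧ (x ∈ B → X ⊆ B) := by
    intro X hX x hx
    obtain ⟨p, hp, hXp⟩ := href X hX
    have hxp := hXp hx
    rw [Finset.disjoint_left] at hAB hAC hBC
    simp only [Finset.mem_insert, Finset.mem_singleton] at hp
    rcases hp with rfl | rfl | rfl
    · exact ⟨fun _ => hXp, fun h => absurd h (hAB hxp)⟩
    · exact ⟨fun h => absurd hxp (hAB h), fun h => hXp⟩
    · exact ⟨fun h => absurd hxp (hAC h), fun h => absurd hxp (hBC h)⟩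
  obtain ⟨⟨x0, y0⟩, hxy⟩ := hgne
  have hxy1 := Finset.mem_product.1 (hgXY hxy)
  have hxy2 := Finset.mem_product.1 (hgAB hxy)
  have hXA : X ⊆ A := (place X hX x0 hxy1.1).1 hxy2.1
  have hYB : Y ⊆ B := (place Y hY y0 hxy1.2).2 hxy2.2
  obtain ⟨w0, hw0⟩ := hZne W hWZ
  have hXW : X ≠ W := by
    rintro rfl
    exact Finset.disjoint_left.1 hAC (hXA hxy1.1) (hWC hxy1.1)
  have hYW : Y ≠ W := by
    rintro rfl
    exact Finset.disjoint_left.1 hBC (hYB hxy1.2) (hWC hxy1.2)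
  have cX : X.card = W.card := hEq X hX W hWZ
  have cY : Y.card = W.card := hEq Y hY W hWZ
  set s := 2 * Real.sqrt δ with hs
  have hspos : 0 < s := by have := Real.sqrt_pos.2 hδ; positivity
  have hsδ : s ^ 2 = 4 * δ := by rw [hs, mul_pow, Real.sq_sqrt hδ.le]; norm_num
  have hn : (0 : ℝ) < W.card := by exact_mod_cast Finset.card_pos.2 ⟨w0, hw0⟩
  have hs1 : s ≤ 1 := by
    have : (W'.card : ℝ) ≤ W.card := by exact_mod_cast Finset.card_le_card hW'
    by_contra hc
    push Not at hc
    nlinarith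
  obtain ⟨hgreg, hgd⟩ := hreg g hgE X hX Y hY hXY hgXY
  have hgedges : bmEdges g X Y = g.card := by
    unfold bmEdges
    congr 1
    ext p
    simp only [Finset.mem_filter]
    exact ⟨fun h => h.1, fun hp => ⟨hp, Finset.mem_product.1 (hgXY hp)⟩⟩
  have hgpos : (0 : ℝ) < g.card := by exact_mod_cast Finset.card_pos.2 ⟨_, hxy⟩
  have hdpos : 0 < bmDens g X Y := by
    unfold bmDens
    rw [hgedges, cX, cY]
    positivity
  have hε0 : 0 ≤ ε₂ := (abs_nonneg _).trans hgd
  have hℓ : 0 < ℓ := by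
    rcases Nat.eq_zero_or_pos ℓ with rfl | h
    · exfalso
      simp at hε₂ hgd
      have := (abs_le.1 hgd).2
      linarith
    · exact h
  set d : ℝ := 1 / (ℓ : ℝ) with hd
  have hℓ1 : (1 : ℝ) ≤ ℓ := by exact_mod_cast hℓ
  have hdp : 0 < d := by rw [hd]; positivity
  have hd1 : d ≤ 1 := by rw [hd, div_le_one (by positivity)]; exact hℓ1
  have hεs : ε₂ ≤ s ^ 4 * d ^ 3 / 1408 := by
    have h1 : s ^ 4 = 16 * δ ^ 2 := by
      have : s ^ 4 = (s ^ 2) ^ 2 := by ring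
      rw [this, hsδ]; ring
    have h2 : d ^ 3 = ((ℓ : ℝ) ^ 3)⁻¹ := by rw [hd, one_div, inv_pow]
    rw [h1, h2]
    linarith
  have a1 : s ^ 4 ≤ s := by
    have : s ^ 3 ≤ 1 := pow_le_one₀ hspos.le hs1
    nlinarith
  have a2 : d ^ 3 ≤ d ^ 2 := by
    have : 0 < d ^ 2 := by positivity
    nlinarith
  have a3 : d ^ 2 ≤ d := by nlinarith
  have b1 : ε₂ ≤ s * d ^ 2 / 1408 := by
    have : s ^ 4 * d ^ 3 ≤ s * d ^ 2 := mul_le_mul a1 a2 (by positivity) hspos.le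
    linarith
  have b2 : ε₂ ≤ s * d / 1408 := by nlinarith
  have b3 : ε₂ ≤ d / 1408 := by nlinarith
  have b4 : ε₂ ≤ d ^ 2 := by
    have : 0 < d ^ 2 := by positivity
    nlinarith
  have hf : (d - 2 * ε₂) * ((W.card : ℝ) * W.card) ≤ g.card := by
    have h1 := (fr_reg_of ε₂ d g X Y hgreg hgd X (Finset.Subset.refl _) Y (Finset.Subset.refl _)
      (by nlinarith [Nat.cast_nonneg (α := ℝ) X.card])
      (by nlinarith [Nat.cast_nonneg (α := ℝ) Y.card])).1
    rw [hgedges, cX, cY] at h1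
    exact h1
  have hF'pos : (0 : ℝ) < F'.card := lt_of_lt_of_le (by positivity) hFc
  have hW'pos : (0 : ℝ) < W'.card := lt_of_lt_of_le (by positivity) hWc
  -- per-triad estimate
  have key : ∀ e2 ∈ graphsIn E X W, ∀ e3 ∈ graphsIn E Y W,
      1 / 2 * ((F'.card : ℝ) * W'.card) * (H ∩ tri g e2 e3).card ≤
        ((g.card : ℝ) * W.card) * (H ∩ tri F' (e2.filter fun x => x.2 ∈ W')
          (e3.filter fun x => x.2 ∈ W')).card := by
    intro e2 he2 e3 he3
    obtain ⟨he2E, he2s⟩ := Finset.mem_filter.1 he2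
    obtain ⟨he3E, he3s⟩ := Finset.mem_filter.1 he3
    obtain ⟨hr2, hd2⟩ := hreg e2 he2E X hX W hWZ hXW he2s
    obtain ⟨hr3, hd3⟩ := hreg e3 he3E Y hY W hWZ hYW he3s
    have R2 := fr_reg_of ε₂ d e2 X W hr2 hd2
    have R3 := fr_reg_of ε₂ d e3 Y W hr3 hd3
    have hlow := fr_tri_lower ε₂ (d - 2 * ε₂) (d + 2 * ε₂) hε0 (by linarith) (by linarith)
      X Y W W' F' e2 e3 (hF'.trans hgXY) hW' R2 R3 (by
        have h1 : ε₂ * W.card ≤ s * d / 1408 * W.card := mul_le_mul_of_nonneg_right b2 hn.le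
        have h2 : d / 2 * (s * W.card) ≤ (d - 2 * ε₂) * W'.card :=
          mul_le_mul (by linarith) hWc (by positivity) (by linarith)
        have : 0 < s * d * W.card := by positivity
        nlinarith)
    have hup := fr_tri_upper ε₂ (d - 2 * ε₂) (d + 2 * ε₂) hε0 (by linarith) (by linarith)
      (by nlinarith) X Y W g e2 e3 hgXY R2 R3
      (fun x hx => (Finset.mem_product.1 (he2s hx)).2)
    rw [cX, cY] at hlow hup
    have har := fr_arith d ε₂ s W.card g.card F'.card W'.card _ _ hdp hd1 hspos hs1 hε0 hεs hn hf
      hFc hW'pos.le hlow hup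
    set f2 := e2.filter fun x => x.2 ∈ W' with hf2
    set f3 := e3.filter fun x => x.2 ∈ W' with hf3
    have hT0 : (0 : ℝ) ≤ (tri g e2 e3).card := by positivity
    have hbig : δ * ((tri g e2 e3).card : ℝ) ≤ (tri F' f2 f3).card := by
      have h1 : (s * g.card) * (s * W.card) ≤ (F'.card : ℝ) * W'.card :=
        mul_le_mul hFc hWc (by positivity) (by positivity)
      have h2 : (4 * δ) * ((g.card : ℝ) * W.card) ≤ (F'.card : ℝ) * W'.card := by
        rw [← hsδ]; linarith
      have h3 := mul_le_mul_of_nonneg_right h2 hT0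
      have hgw : (0 : ℝ) < (g.card : ℝ) * W.card := by positivity
      refine le_of_mul_le_mul_right ?_ hgw
      have : 0 ≤ δ * ((tri g e2 e3).card : ℝ) * ((g.card : ℝ) * W.card) := by positivity
      nlinarith
    have hden := hdense (g, e2, e3) (by
        unfold triads
        refine Finset.mem_filter.2 ⟨by simp [hgE, he2E, he3E], X, hX, Y, hY, W, hWZ, hXY, hXW,
          hYW, hgXY, he2s, he3s⟩) F' hF' f2 (Finset.filter_subset _ _) f3
        (Finset.filter_subset _ _) hbig
    dsimp only at hden
    rw [← fr_triDens_mul H g e2 e3, ← fr_triDens_mul H F' f2 f3]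
    have hD0 : 0 ≤ triDens H g e2 e3 := by unfold triDens; positivity
    have h1 := mul_le_mul_of_nonneg_right hden (by positivity :
      (0 : ℝ) ≤ ((tri F' f2 f3).card : ℝ) * ((g.card : ℝ) * W.card))
    have h2 := mul_le_mul_of_nonneg_left har hD0
    linarith
  -- upper bound for the full pair
  let f2 : Finset (α × α) → Finset (α × α) := fun e => e.filter fun x => x.2 ∈ W'
  have hupper : bmEdges (GH3 H) g W ≤
      ∑ q ∈ graphsIn E X W ×ˢ graphsIn E Y W, (H ∩ tri g q.1 q.2).card := by
    rw [fr_edges_GH3]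
    refine le_trans (Finset.card_le_card ?_) Finset.card_biUnion_le
    rintro ⟨a, b, c⟩ ht
    obtain ⟨htH, htg, htW⟩ := Finset.mem_filter.1 ht
    have hab := Finset.mem_product.1 (hgXY htg)
    obtain ⟨e2, he2, he2s, h2⟩ := hEcov X hX W hWZ hXW (a, c) (Finset.mem_product.2 ⟨hab.1, htW⟩)
    obtain ⟨e3, he3, he3s, h3⟩ := hEcov Y hY W hWZ hYW (b, c) (Finset.mem_product.2 ⟨hab.2, htW⟩)
    refine Finset.mem_biUnion.2 ⟨(e2, e3), Finset.mem_product.2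
      ⟨Finset.mem_filter.2 ⟨he2, he2s⟩, Finset.mem_filter.2 ⟨he3, he3s⟩⟩, ?_⟩
    exact Finset.mem_inter.2 ⟨htH, (fr_mem_tri _ _ _ _ _ _).2 ⟨htg, h2, h3⟩⟩
  have hlower : ∑ q ∈ graphsIn E X W ×ˢ graphsIn E Y W, (H ∩ tri F' (f2 q.1) (f2 q.2)).card ≤
      bmEdges (GH3 H) F' W' := by
    rw [fr_edges_GH3, ← Finset.card_biUnion]
    · apply Finset.card_le_card
      rintro ⟨a, b, c⟩ ht
      obtain ⟨q, -, ht⟩ := Finset.mem_biUnion.1 ht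
      obtain ⟨htH, ht⟩ := Finset.mem_inter.1 ht
      obtain ⟨h1, h2, -⟩ := (fr_mem_tri _ _ _ _ _ _).1 ht
      exact Finset.mem_filter.2 ⟨htH, h1, (Finset.mem_filter.1 h2).2⟩
    · rintro ⟨e2, e3⟩ hq ⟨e2', e3'⟩ hq' hne
      refine Finset.disjoint_left.2 ?_
      rintro ⟨a, b, c⟩ ht ht'
      obtain ⟨-, h2, h3⟩ := (fr_mem_tri _ _ _ _ _ _).1 (Finset.mem_inter.1 ht).2
      obtain ⟨-, h2', h3'⟩ := (fr_mem_tri _ _ _ _ _ _).1 (Finset.mem_inter.1 ht').2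
      have h2 := (Finset.mem_filter.1 h2).1
      have h3 := (Finset.mem_filter.1 h3).1
      have h2' := (Finset.mem_filter.1 h2').1
      have h3' := (Finset.mem_filter.1 h3').1
      obtain ⟨m2, m3⟩ := Finset.mem_product.1 (Finset.mem_coe.1 hq)
      obtain ⟨m2', m3'⟩ := Finset.mem_product.1 (Finset.mem_coe.1 hq')
      apply hne
      have k2 : e2 = e2' := by
        by_contra hc
        exact Finset.disjoint_left.1 (hEdisj e2 (Finset.mem_filter.1 m2).1 e2'
          (Finset.mem_filter.1 m2').1 hc) h2 h2'
      have k3 : e3 = e3' := by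
        by_contra hc
        exact Finset.disjoint_left.1 (hEdisj e3 (Finset.mem_filter.1 m3).1 e3'
          (Finset.mem_filter.1 m3').1 hc) h3 h3'
      rw [k2, k3]
  have hfinal : 1 / 2 * ((F'.card : ℝ) * W'.card) * bmEdges (GH3 H) g W ≤
      ((g.card : ℝ) * W.card) * bmEdges (GH3 H) F' W' := by
    have hu : (bmEdges (GH3 H) g W : ℝ) ≤
        ∑ q ∈ graphsIn E X W ×ˢ graphsIn E Y W, ((H ∩ tri g q.1 q.2).card : ℝ) := by
      exact_mod_cast hupper
    have hl : ∑ q ∈ graphsIn E X W ×ˢ graphsIn E Y W,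
        ((H ∩ tri F' (f2 q.1) (f2 q.2)).card : ℝ) ≤ bmEdges (GH3 H) F' W' := by
      exact_mod_cast hlower
    refine le_trans (mul_le_mul_of_nonneg_left hu (by positivity))
      (le_trans ?_ (mul_le_mul_of_nonneg_left hl (by positivity)))
    rw [Finset.mul_sum, Finset.mul_sum]
    refine Finset.sum_le_sum fun q hq => ?_
    obtain ⟨m2, m3⟩ := Finset.mem_product.1 hq
    exact key q.1 m2 q.2 m3
  unfold bmDens
  rw [ge_iff_le, ← mul_div_assoc, div_le_div_iff₀ (by positivity) (by positivity)]
  linarith
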